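/- Let r,s,t,u be integers with ru−st=±1 and s even. Then there is a (unique) group homomorphism φ₄ : G(r,s,t,u) → ℤ/2ℤ sending the generators a ↦ 1, b ↦ 1, c ↦ 0, and its kernel is isomorphic, as an abstract group, to G(r, s/2, 2t, u). -/

import Mathlib

/-- The relators of the presentation of the fundamental group of the sapphire
Sol 3-manifold determined by the matrix `[[r, s], [t, u]]`:
`a·b·a⁻¹·b`, `c²·a^(−2r)·b^(−s)` and `c·a^(2t)·b^u·c⁻¹·a^(2t)·b^u`,
where `a, b, c` are the generators `of 0, of 1, of 2`. -/
def sapphireRels (r s t u : ℤ) : Set (FreeGroup (Fin 3)) :=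
  { FreeGroup.of 0 * FreeGroup.of 1 * (FreeGroup.of 0)⁻¹ * FreeGroup.of 1,
    FreeGroup.of 2 ^ (2 : ℤ) * FreeGroup.of 0 ^ (-(2 * r)) * FreeGroup.of 1 ^ (-s),
    FreeGroup.of 2 * FreeGroup.of 0 ^ (2 * t) * FreeGroup.of 1 ^ u * (FreeGroup.of 2)⁻¹ *
      FreeGroup.of 0 ^ (2 * t) * FreeGroup.of 1 ^ u }

/-- The fundamental group `G(r,s,t,u)` of the sapphire Sol 3-manifold. -/
abbrev SapphireGroup (r s t u : ℤ) := PresentedGroup (sapphireRels r s t u)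

/-! The elements `ab`, `b²`, `c` satisfy the relations of `K = G(r, s/2, 2t, u)`, which gives a
homomorphism `f : K → G(r, s, t, u)` with image in the kernel of `φ₄`. As `u` is odd, the third
relation expresses `b c b⁻¹` through `ab`, `b²`, `c`, so conjugation by `b` corresponds to an
endomorphism `σ` of `K` and preserves the image of `f`; modulo this image the group is generated by
`b`, so the image is the whole kernel. For injectivity, `σ` fixes the generator `B` of `K` and `σ²`
is conjugation by `B`, hence `K` embeds in a group `E` containing a square root `β` of `B` that
induces `σ`. With `A`, `C` the other generators of `K`, the elements `βA`, `β`, `C` satisfy the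
relations of `G(r, s, t, u)`, and the resulting map `G(r, s, t, u) → E` composed with `f` is the
embedding of `K`. -/

theorem odd_of_odd_mul_sub_mul {r s t u : ℤ} (h : Odd (r * u - s * t)) (hs : Even s) : Odd u := by
  have hru : Odd (r * u) := by simpa using h.add_even (hs.mul_right t)
  exact (Int.odd_mul.1 hru).2

section Group

variable {G : Type*} [Group G]

theorem mul_mul_inv_mul_eq_one_iff {a b : G} : a * b * a⁻¹ * b = 1 ↔ b * a * b = a := by
  rw [mul_eq_one_iff_eq_inv, mul_inv_eq_iff_eq_mul, eq_inv_mul_iff_mul_eq, mul_assoc]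

theorem commute_sq_of_mul_mul_eq {a b : G} (h : b * a * b = a) : Commute (a ^ 2) b := by
  have hab : a * b = b⁻¹ * a := by rw [eq_inv_mul_iff_mul_eq, ← mul_assoc, h]
  have hab' : a * b⁻¹ = b * a := by rw [mul_inv_eq_iff_eq_mul, h]
  calc a ^ 2 * b = a * b⁻¹ * a := by rw [pow_two, mul_assoc, hab, mul_assoc]
    _ = b * a ^ 2 := by rw [hab', pow_two, mul_assoc]

theorem commute_sq_zpow_mul_sq_zpow {a b : G} (h : b * a * b = a) (p q : ℤ) :
    Commute ((a ^ 2) ^ p * (b ^ 2) ^ q) b :=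
  ((commute_sq_of_mul_mul_eq h).zpow_left p).mul_left ((Commute.pow_self b 2).zpow_left q)

theorem mul_sq_eq_of_mul_mul_eq {a b : G} (h : b * a * b = a) : (a * b) ^ 2 = a ^ 2 := by
  rw [pow_two, mul_assoc, ← mul_assoc b, h, pow_two]

theorem mul_sq_eq_of_mul_mul_eq' {a b : G} (h : b * a * b = a) : (b * a) ^ 2 = a ^ 2 := by
  rw [pow_two, ← mul_assoc, h, pow_two]

theorem zpow_two_mul_mul_zpow_two_mul_add_one {x y : G} (h : Commute x y) (t m : ℤ) :
    x ^ (2 * t) * y ^ (2 * m + 1) = (x ^ t * y ^ m) * (x ^ t * y ^ m) * y := by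
  rw [← pow_two, (h.zpow_zpow t m).mul_pow, zpow_add_one, ← mul_assoc, ← zpow_natCast,
    ← zpow_natCast, ← zpow_mul, ← zpow_mul, mul_comm t, mul_comm m, Nat.cast_ofNat]

theorem mul_mul_mul_eq_iff_eq_conj {y b : G} (h : Commute y b) (c : G) :
    y * b * c * (y * b) = c ↔ y * b ^ 2 * c * y = b * c * b⁻¹ := by
  have hconj : b * (y * b * c * (y * b)) * b⁻¹ = y * b ^ 2 * c * y := by
    calc b * (y * b * c * (y * b)) * b⁻¹ = b * y * b * c * y := by group
      _ = y * b ^ 2 * c * y := by rw [← h.eq, mul_assoc y, pow_two]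
  rw [← hconj, mul_left_inj, mul_right_inj]

theorem ker_eq_of_sup_zpowers_eq_top {H : Type*} [Group H] {N : Subgroup G} {b : G}
    (hN : N ⊔ Subgroup.zpowers b = ⊤) (hb : b ∈ Subgroup.normalizer (N : Set G))
    (hsq : b ^ 2 ∈ N) {φ : G →* H} (hle : N ≤ φ.ker) (hφ : φ b ≠ 1) : φ.ker = N := by
  have : N.Normal := by
    rw [← Subgroup.normalizer_eq_top_iff, eq_top_iff, ← hN]
    exact sup_le Subgroup.le_normalizer (Subgroup.zpowers_le.2 hb)
  refine le_antisymm (fun g hg ↦ ?_) hle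
  obtain ⟨x, hx, _, ⟨n, rfl⟩, rfl⟩ :=
    Subgroup.mem_sup_of_normal_left.1 (hN ▸ Subgroup.mem_top g : g ∈ N ⊔ Subgroup.zpowers b)
  have hφn : φ b ^ n = 1 := by simpa [MonoidHom.mem_ker, MonoidHom.mem_ker.1 (hle hx)] using hg
  have hφsq : φ b ^ (2 : ℤ) = 1 := by simpa [zpow_ofNat] using hle hsq
  have hn : Even n := by
    by_contra hodd
    obtain ⟨m, rfl⟩ := Int.not_even_iff_odd.1 hodd
    exact hφ (by simpa [zpow_add_one, zpow_mul, hφsq] using hφn)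
  obtain ⟨m, rfl⟩ := hn.exists_two_nsmul
  refine N.mul_mem hx ?_
  simpa [zpow_mul, zpow_ofNat] using N.zpow_mem hsq m

end Group

universe w

/-- The group `E` acts on two copies of `K`: `K` acts by left multiplication, twisted by `σ` on the
second copy, and `β` exchanges the copies. -/
theorem exists_group_sq_eq_of_conj {K : Type w} [Group K] (σ : K →* K) (z : K) (hz : σ z = z)
    (hσ : ∀ x, σ (σ x) = z * x * z⁻¹) :
    ∃ (E : Type w) (_ : Group E) (i : K →* E) (β : E),
      Function.Injective i ∧ β ^ 2 = i z ∧ ∀ x, i (σ x) = β * i x * β⁻¹ := by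
  let L : K →* Equiv.Perm K := MulAction.toPermHom K K
  let i : K →* Equiv.Perm (K ⊕ K) := (Equiv.Perm.sumCongrHom K K).comp (L.prod (L.comp σ))
  let β : Equiv.Perm (K ⊕ K) := (Equiv.sumCongr (L z) 1).trans (Equiv.sumComm K K)
  have i_inl (x y : K) : i x (.inl y) = .inl (x * y) := rfl
  have i_inr (x y : K) : i x (.inr y) = .inr (σ x * y) := rfl
  have β_inl (y : K) : β (.inl y) = .inr (z * y) := rfl
  have β_inr (y : K) : β (.inr y) = .inl y := rfl
  refine ⟨Equiv.Perm (K ⊕ K), inferInstance, i, β, fun x y hxy ↦ ?_, ?_, fun x ↦ ?_⟩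
  · simpa [i_inl] using Equiv.congr_fun hxy (.inl 1)
  · ext (y | y) <;> simp [pow_two, i_inl, i_inr, β_inl, β_inr, hz]
  · rw [eq_mul_inv_iff_mul_eq]
    ext (y | y) <;> simp [i_inl, i_inr, β_inl, β_inr, hσ, mul_assoc]

/-- The defining relations of `G(r,s,t,u)` for elements `a`, `b`, `c` of a group. The first and the
third relator are written without inverses, and the second is solved for `c ^ 2`. -/
structure IsSapphireTriple {G : Type*} [Group G] (r s t u : ℤ) (a b c : G) : Prop where
  klein : b * a * b = a
  sq_eq : c ^ 2 = (a ^ 2) ^ r * b ^ s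
  twist : (a ^ 2) ^ t * b ^ u * c * ((a ^ 2) ^ t * b ^ u) = c

namespace IsSapphireTriple

variable {G : Type*} [Group G] {r s t u m : ℤ} {a b c : G}

theorem iff_forall_lift_eq_one :
    IsSapphireTriple r s t u a b c ↔
      ∀ x ∈ sapphireRels r s t u, FreeGroup.lift ![a, b, c] x = 1 := by
  have ha (n : ℤ) : a ^ (2 * n) = (a ^ 2) ^ n := by rw [zpow_mul, zpow_ofNat]
  have hklein : a * b * a⁻¹ * b = 1 ↔ b * a * b = a := mul_mul_inv_mul_eq_one_iff
  have hsq (hab : Commute (a ^ 2) b) :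
      c ^ (2 : ℤ) * ((a ^ 2) ^ r)⁻¹ * (b ^ s)⁻¹ = 1 ↔ c ^ 2 = (a ^ 2) ^ r * b ^ s := by
    rw [zpow_ofNat, mul_assoc, ← mul_inv_rev, mul_inv_eq_one, (hab.zpow_zpow r s).eq]
  have htwist : c * (a ^ 2) ^ t * b ^ u * c⁻¹ * (a ^ 2) ^ t * b ^ u = 1 ↔
      (a ^ 2) ^ t * b ^ u * c * ((a ^ 2) ^ t * b ^ u) = c := by
    rw [← mul_mul_inv_mul_eq_one_iff]
    simp only [mul_assoc]
  simp only [sapphireRels, Set.mem_insert_iff, Set.mem_singleton_iff, forall_eq_or_imp, forall_eq,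
    map_mul, map_inv, map_zpow, FreeGroup.lift_apply_of, Matrix.cons_val, zpow_neg, ha,
    hklein, htwist]
  exact ⟨fun h ↦ ⟨h.klein, (hsq (commute_sq_of_mul_mul_eq h.klein)).2 h.sq_eq, h.twist⟩,
    fun ⟨h₁, h₂, h₃⟩ ↦ ⟨h₁, (hsq (commute_sq_of_mul_mul_eq h₁)).1 h₂, h₃⟩⟩

theorem of_sq_eq_one {g : G} (hg : g ^ 2 = 1) (hs : Even s) :
    IsSapphireTriple r s t u g g 1 where
  klein := by rw [← pow_two, hg, one_mul]
  sq_eq := by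
    obtain ⟨k, rfl⟩ := hs.exists_two_nsmul
    simp [hg, zpow_mul, zpow_ofNat]
  twist := by simp [hg, ← (Commute.refl g).mul_zpow, ← pow_two]

theorem map {H : Type*} [Group H] (f : G →* H) (h : IsSapphireTriple r s t u a b c) :
    IsSapphireTriple r s t u (f a) (f b) (f c) where
  klein := by simpa using congr(f $h.klein)
  sq_eq := by simpa using congr(f $h.sq_eq)
  twist := by simpa using congr(f $h.twist)

theorem commute_sq (h : IsSapphireTriple r s t u a b c) : Commute (a ^ 2) b :=
  commute_sq_of_mul_mul_eq h.klein

theorem commute_zpow_mul_zpow (h : IsSapphireTriple r s t u a b c) (p q : ℤ) :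
    Commute ((a ^ 2) ^ p * b ^ q) b :=
  (h.commute_sq.zpow_left p).mul_left (Commute.zpow_self b q)

theorem commute_zpow_mul_zpow_sq (h : IsSapphireTriple r s t u a b c) (p q : ℤ) :
    Commute ((a ^ 2) ^ p * b ^ q) (c ^ 2) := by
  have ha : Commute (a ^ 2) (c ^ 2) :=
    h.sq_eq ▸ (Commute.self_zpow _ r).mul_right (h.commute_sq.zpow_right s)
  have hb : Commute b (c ^ 2) :=
    h.sq_eq ▸ (h.commute_sq.symm.zpow_right r).mul_right (Commute.self_zpow b s)
  exact (ha.zpow_left p).mul_left (hb.zpow_left q)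

theorem cover (h : IsSapphireTriple r (2 * s) t u a b c) :
    IsSapphireTriple r s (2 * t) u (a * b) (b ^ 2) c where
  klein := by
    calc b ^ 2 * (a * b) * b ^ 2 = b * (b * a * b) * b * b := by simp only [pow_two, mul_assoc]
      _ = a * b := by rw [h.klein, h.klein]
  sq_eq := by rw [mul_sq_eq_of_mul_mul_eq h.klein, h.sq_eq, zpow_mul, zpow_ofNat]
  twist := by
    set d := (a ^ 2) ^ t * b ^ u
    have hdd : (a ^ 2) ^ (2 * t) * (b ^ 2) ^ u = d * d := by
      rw [← zpow_ofNat b, ← zpow_mul, two_mul, two_mul, zpow_add, zpow_add,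
        (h.commute_sq.zpow_zpow t u).mul_mul_mul_comm]
    rw [mul_sq_eq_of_mul_mul_eq h.klein, hdd]
    calc d * d * c * (d * d) = d * (d * c * d) * d := by simp only [mul_assoc]
      _ = c := by rw [h.twist, h.twist]

theorem twist_factored (h : IsSapphireTriple r s (2 * t) (2 * m + 1) a b c) :
    (a ^ 2) ^ t * b ^ m * ((a ^ 2) ^ t * b ^ m) * b * c *
      ((a ^ 2) ^ t * b ^ m * ((a ^ 2) ^ t * b ^ m) * b) = c := by
  simpa only [zpow_two_mul_mul_zpow_two_mul_add_one h.commute_sq] using h.twist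

theorem conj (h : IsSapphireTriple r s (2 * t) (2 * m + 1) a b c) :
    IsSapphireTriple r s (2 * t) (2 * m + 1) (b * a) b
      ((a ^ 2) ^ t * b ^ m * b * c * ((a ^ 2) ^ t * b ^ m)) := by
  have hyb := h.commute_zpow_mul_zpow t m
  have hyc := h.commute_zpow_mul_zpow_sq t m
  have htwist := h.twist_factored
  have hd := zpow_two_mul_mul_zpow_two_mul_add_one h.commute_sq t m
  set y := (a ^ 2) ^ t * b ^ m
  refine ⟨by rw [mul_assoc, h.klein], ?_, ?_⟩
  · rw [mul_sq_eq_of_mul_mul_eq' h.klein, ← h.sq_eq]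
    calc (y * b * c * y) ^ 2 = y⁻¹ * ((y * y * b) * c * (y * y * b) * c) * y := by
          rw [pow_two]; group
      _ = c ^ 2 := by rw [htwist, ← pow_two, hyc.inv_mul_cancel]
  · rw [mul_sq_eq_of_mul_mul_eq' h.klein, hd]
    have hyd : Commute y (y * y * b) := ((Commute.refl y).mul_right (Commute.refl y)).mul_right hyb
    have hybd : Commute (y * b) (y * y * b) :=
      hyd.mul_left ((hyb.symm.mul_right hyb.symm).mul_right (Commute.refl b))
    calc y * y * b * (y * b * c * y) * (y * y * b)
        = (y * y * b * (y * b)) * c * (y * (y * y * b)) := by simp only [mul_assoc]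
      _ = y * b * (y * y * b * c * (y * y * b)) * y := by
        rw [← hybd.eq, hyd.eq]; simp only [mul_assoc]
      _ = y * b * c * y := by rw [htwist]

theorem conj_conj_eq (h : IsSapphireTriple r s (2 * t) (2 * m + 1) a b c) :
    (a ^ 2) ^ t * b ^ m * b * ((a ^ 2) ^ t * b ^ m * b * c * ((a ^ 2) ^ t * b ^ m)) *
      ((a ^ 2) ^ t * b ^ m) = b * c * b⁻¹ := by
  have hyb := h.commute_zpow_mul_zpow t m
  have htwist := (mul_mul_mul_eq_iff_eq_conj (hyb.mul_left hyb) c).1 h.twist_factored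
  set y := (a ^ 2) ^ t * b ^ m
  calc y * b * (y * b * c * y) * y = y * (b * y) * b * c * (y * y) := by simp only [mul_assoc]
    _ = y * y * b ^ 2 * c * (y * y) := by simp only [← hyb.eq, pow_two, mul_assoc]
    _ = b * c * b⁻¹ := htwist

theorem cover_conj_eq (h : IsSapphireTriple r s t (2 * m + 1) a b c) :
    (a ^ 2) ^ t * (b ^ 2) ^ m * b ^ 2 * c * ((a ^ 2) ^ t * (b ^ 2) ^ m) = b * c * b⁻¹ := by
  have htwist := h.twist
  rw [zpow_add_one, zpow_mul, zpow_ofNat, ← mul_assoc (_ ^ t)] at htwist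
  exact (mul_mul_mul_eq_iff_eq_conj (commute_sq_zpow_mul_sq_zpow h.klein t m) c).1 htwist

theorem of_sqrt (hab : b * a * b = a) (hsq : c ^ 2 = (a ^ 2) ^ r * (b ^ 2) ^ s)
    (hc : (a ^ 2) ^ t * (b ^ 2) ^ m * b ^ 2 * c * ((a ^ 2) ^ t * (b ^ 2) ^ m) = b * c * b⁻¹) :
    IsSapphireTriple r (2 * s) t (2 * m + 1) (b * a) b c where
  klein := by rw [mul_assoc, hab]
  sq_eq := by rw [mul_sq_eq_of_mul_mul_eq' hab, hsq, zpow_mul, zpow_ofNat]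
  twist := by
    rw [mul_sq_eq_of_mul_mul_eq' hab, zpow_add_one, zpow_mul, zpow_ofNat, ← mul_assoc (_ ^ t)]
    exact (mul_mul_mul_eq_iff_eq_conj (commute_sq_zpow_mul_sq_zpow hab t m) c).2 hc

end IsSapphireTriple

namespace SapphireGroup

open PresentedGroup (of)

variable {r s t u m : ℤ} {G : Type*} [Group G] {a b c : G}

theorem isSapphireTriple_of :
    IsSapphireTriple r s t u (of 0 : SapphireGroup r s t u) (of 1) (of 2) := by
  rw [IsSapphireTriple.iff_forall_lift_eq_one]
  intro x hx
  have hlift : FreeGroup.lift ![of 0, of 1, of 2] = PresentedGroup.mk (sapphireRels r s t u) := by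
    ext i
    fin_cases i <;> simp [PresentedGroup.of]
  rw [hlift]
  exact PresentedGroup.one_of_mem hx

/-- The homomorphism out of `G(r,s,t,u)` given by three elements that satisfy its relations. -/
def lift (h : IsSapphireTriple r s t u a b c) : SapphireGroup r s t u →* G :=
  PresentedGroup.toGroup (IsSapphireTriple.iff_forall_lift_eq_one.1 h)

@[simp]
theorem lift_of_zero (h : IsSapphireTriple r s t u a b c) : lift h (of 0) = a :=
  PresentedGroup.toGroup.of _

@[simp]
theorem lift_of_one (h : IsSapphireTriple r s t u a b c) : lift h (of 1) = b :=
  PresentedGroup.toGroup.of _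

@[simp]
theorem lift_of_two (h : IsSapphireTriple r s t u a b c) : lift h (of 2) = c :=
  PresentedGroup.toGroup.of _

theorem hom_ext {f g : SapphireGroup r s t u →* G} (h₀ : f (of 0) = g (of 0))
    (h₁ : f (of 1) = g (of 1)) (h₂ : f (of 2) = g (of 2)) : f = g :=
  PresentedGroup.ext (Fin.forall_fin_succ.2 ⟨h₀, Fin.forall_fin_two.2 ⟨h₁, h₂⟩⟩)

theorem eq_top_of_mem {N : Subgroup (SapphireGroup r s t u)} (h₀ : of 0 ∈ N) (h₁ : of 1 ∈ N)
    (h₂ : of 2 ∈ N) : N = ⊤ := by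
  rw [eq_top_iff, ← PresentedGroup.closure_range_of, Subgroup.closure_le, Set.range_subset_iff]
  exact Fin.forall_fin_succ.2 ⟨h₀, Fin.forall_fin_two.2 ⟨h₁, h₂⟩⟩

/-- The homomorphism `f : G(r,s,2t,u) → G(r,2s,t,u)` sending the generators to `ab`, `b²`, `c`; for
odd `u` it is the inclusion of the kernel of `φ₄`. -/
def coverHom (r s t u : ℤ) : SapphireGroup r s (2 * t) u →* SapphireGroup r (2 * s) t u :=
  lift isSapphireTriple_of.cover

/-- The endomorphism `σ` of `G(r,s,2t,2m+1)` that corresponds under `coverHom` to conjugation by the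
generator `b`. -/
def conjHom (r s t m : ℤ) :
    SapphireGroup r s (2 * t) (2 * m + 1) →* SapphireGroup r s (2 * t) (2 * m + 1) :=
  lift isSapphireTriple_of.conj

theorem conjHom_conjHom (x : SapphireGroup r s (2 * t) (2 * m + 1)) :
    conjHom r s t m (conjHom r s t m x) = of 1 * x * (of 1)⁻¹ := by
  suffices (conjHom r s t m).comp (conjHom r s t m) = (MulAut.conj (of 1)).toMonoidHom from
    DFunLike.congr_fun this x
  have hK := isSapphireTriple_of (r := r) (s := s) (t := 2 * t) (u := 2 * m + 1)
  refine hom_ext ?_ ?_ ?_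
  · simp [conjHom, eq_mul_inv_iff_mul_eq, mul_assoc, hK.klein]
  · simp [conjHom]
  · simpa [conjHom, mul_sq_eq_of_mul_mul_eq' hK.klein] using hK.conj_conj_eq

theorem coverHom_conjHom (x : SapphireGroup r s (2 * t) (2 * m + 1)) :
    coverHom r s t (2 * m + 1) (conjHom r s t m x) =
      of 1 * coverHom r s t (2 * m + 1) x * (of 1)⁻¹ := by
  suffices (coverHom r s t (2 * m + 1)).comp (conjHom r s t m) =
      (MulAut.conj (of 1)).toMonoidHom.comp (coverHom r s t (2 * m + 1)) from
    DFunLike.congr_fun this x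
  have hG := isSapphireTriple_of (r := r) (s := 2 * s) (t := t) (u := 2 * m + 1)
  refine hom_ext ?_ ?_ ?_
  · simpa [conjHom, coverHom, pow_two, eq_mul_inv_iff_mul_eq, mul_assoc] using hG.klein
  · simp [conjHom, coverHom, pow_two, mul_assoc]
  · simpa [conjHom, coverHom, mul_sq_eq_of_mul_mul_eq hG.klein] using hG.cover_conj_eq

theorem coverHom_injective (hu : Odd u) : Function.Injective (coverHom r s t u) := by
  obtain ⟨m, rfl⟩ := hu
  obtain ⟨E, _, i, β, hi, hβ, hconj⟩ :=
    exists_group_sq_eq_of_conj (conjHom r s t m) (of 1) (by simp [conjHom]) conjHom_conjHom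
  have hsq : i (of 2) ^ 2 = (i (of 0) ^ 2) ^ r * (β ^ 2) ^ s :=
    hβ ▸ (isSapphireTriple_of.map i).sq_eq
  have hA : β * i (of 0) * β = i (of 0) := by
    simpa [conjHom, ← hβ, pow_two, mul_assoc, eq_mul_inv_iff_mul_eq] using hconj (of 0)
  have hC := by simpa [conjHom, ← hβ] using hconj (of 2)
  have hE : IsSapphireTriple r (2 * s) t (2 * m + 1) (β * i (of 0)) β (i (of 2)) :=
    .of_sqrt hA hsq hC
  have hlift : (lift hE).comp (coverHom r s t (2 * m + 1)) = i := by
    refine hom_ext ?_ ?_ ?_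
    · simp [coverHom, hA]
    · simp [coverHom, hβ]
    · simp [coverHom]
  refine Function.Injective.of_comp (f := lift hE) ?_
  rwa [← MonoidHom.coe_comp, hlift]

theorem of_mem_range_coverHom :
    of 0 * of 1 ∈ (coverHom r s t u).range ∧ of 1 ^ 2 ∈ (coverHom r s t u).range ∧
      of 2 ∈ (coverHom r s t u).range :=
  ⟨⟨of 0, lift_of_zero _⟩, ⟨of 1, lift_of_one _⟩, ⟨of 2, lift_of_two _⟩⟩

theorem range_coverHom_sup_zpowers : (coverHom r s t u).range ⊔ Subgroup.zpowers (of 1) = ⊤ := by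
  obtain ⟨hab, -, hc⟩ := of_mem_range_coverHom (r := r) (s := s) (t := t) (u := u)
  have hb : of 1 ∈ (coverHom r s t u).range ⊔ Subgroup.zpowers (of 1) :=
    Subgroup.mem_sup_right (Subgroup.mem_zpowers _)
  refine eq_top_of_mem ?_ hb (Subgroup.mem_sup_left hc)
  exact (Subgroup.mul_mem_cancel_right _ hb).1 (Subgroup.mem_sup_left hab)

theorem of_one_mem_normalizer_range_coverHom (hu : Odd u) :
    of 1 ∈ Subgroup.normalizer ((coverHom r s t u).range : Set (SapphireGroup r (2 * s) t u)) := by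
  obtain ⟨m, rfl⟩ := hu
  have hconj {g} (hg : g ∈ (coverHom r s t (2 * m + 1)).range) :
      of 1 * g * (of 1)⁻¹ ∈ (coverHom r s t (2 * m + 1)).range := by
    obtain ⟨x, rfl⟩ := hg
    exact ⟨_, coverHom_conjHom x⟩
  refine Subgroup.mem_normalizer_iff.2 fun g ↦ ⟨hconj, fun hg ↦ ?_⟩
  have hsq := of_mem_range_coverHom (r := r) (s := s) (t := t) (u := 2 * m + 1) |>.2.1
  have := mul_mem (mul_mem (inv_mem hsq) (hconj hg)) hsq
  convert this using 1
  group

theorem ker_eq_range_coverHom (hu : Odd u) {H : Type*} [Group H]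
    {φ : SapphireGroup r (2 * s) t u →* H} (hsq : φ (of 1) ^ 2 = 1) (h₁ : φ (of 1) ≠ 1)
    (h₀ : φ (of 0) = φ (of 1)) (h₂ : φ (of 2) = 1) : φ.ker = (coverHom r s t u).range := by
  refine ker_eq_of_sup_zpowers_eq_top range_coverHom_sup_zpowers
    (of_one_mem_normalizer_range_coverHom hu) of_mem_range_coverHom.2.1 ?_ h₁
  suffices φ.comp (coverHom r s t u) = 1 by
    rintro _ ⟨x, rfl⟩
    exact DFunLike.congr_fun this x
  refine hom_ext ?_ ?_ ?_
  · simpa [coverHom, h₀, ← pow_two]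
  · simpa [coverHom]
  · simpa [coverHom]

end SapphireGroup

theorem stmt3_general (r s t u : ℤ) (hs : Even s) (hu : Odd u) :
    (∃! φ : SapphireGroup r s t u →* Multiplicative (ZMod 2),
      φ (PresentedGroup.of 0) = Multiplicative.ofAdd (1 : ZMod 2) ∧
      φ (PresentedGroup.of 1) = Multiplicative.ofAdd (1 : ZMod 2) ∧
      φ (PresentedGroup.of 2) = Multiplicative.ofAdd (0 : ZMod 2)) ∧
    ∀ φ : SapphireGroup r s t u →* Multiplicative (ZMod 2),
      φ (PresentedGroup.of 0) = Multiplicative.ofAdd (1 : ZMod 2) →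
      φ (PresentedGroup.of 1) = Multiplicative.ofAdd (1 : ZMod 2) →
      φ (PresentedGroup.of 2) = Multiplicative.ofAdd (0 : ZMod 2) →
      Nonempty (φ.ker ≃* SapphireGroup r (s / 2) (2 * t) u) := by
  constructor
  · have h : IsSapphireTriple r s t u (Multiplicative.ofAdd (1 : ZMod 2))
        (Multiplicative.ofAdd 1) (Multiplicative.ofAdd 0) :=
      .of_sq_eq_one rfl hs
    refine ⟨SapphireGroup.lift h, by simp, ?_⟩
    rintro φ ⟨h₀, h₁, h₂⟩
    exact SapphireGroup.hom_ext (by simp [h₀]) (by simp [h₁]) (by simp [h₂])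
  · intro φ h₀ h₁ h₂
    obtain ⟨k, rfl⟩ := hs.two_dvd
    have hker : φ.ker = (SapphireGroup.coverHom r k t u).range :=
      SapphireGroup.ker_eq_range_coverHom hu (by rw [h₁]; rfl) (by rw [h₁]; decide)
        (by rw [h₀, h₁]) h₂
    rw [Int.mul_ediv_cancel_left k two_ne_zero]
    exact ⟨(MulEquiv.subgroupCongr hker).trans
      (MonoidHom.ofInjective (SapphireGroup.coverHom_injective hu)).symm⟩

theorem stmt3 (r s t u : ℤ) (h : r * u - s * t = 1 ∨ r * u - s * t = -1) (hs : Even s) :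
    (∃! φ : SapphireGroup r s t u →* Multiplicative (ZMod 2),
      φ (PresentedGroup.of 0) = Multiplicative.ofAdd (1 : ZMod 2) ∧
      φ (PresentedGroup.of 1) = Multiplicative.ofAdd (1 : ZMod 2) ∧
      φ (PresentedGroup.of 2) = Multiplicative.ofAdd (0 : ZMod 2)) ∧
    ∀ φ : SapphireGroup r s t u →* Multiplicative (ZMod 2),
      φ (PresentedGroup.of 0) = Multiplicative.ofAdd (1 : ZMod 2) →
      φ (PresentedGroup.of 1) = Multiplicative.ofAdd (1 : ZMod 2) →
      φ (PresentedGroup.of 2) = Multiplicative.ofAdd (0 : ZMod 2) →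
      Nonempty (φ.ker ≃* SapphireGroup r (s / 2) (2 * t) u) := by
  have hdet : Odd (r * u - s * t) := by rcases h with h | h <;> simp [h]
  exact stmt3_general r s t u hs (odd_of_odd_mul_sub_mul hdet hs)
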